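/- Let Z₁ and Z₂ be real vector spaces with bilinear forms ω₁ : Z₁ →ₗ[ℝ] Z₁ →ₗ[ℝ] ℝ and ω₂ : Z₂ →ₗ[ℝ] Z₂ →ₗ[ℝ] ℝ. Define the difference form Ω on Z₂ × Z₁ by Ω((z₂,z₁))((w₂,w₁)) := ω₂(z₂)(w₂) − ω₁(z₁)(w₁), the tangent lifts ω̇ᵢ on Zᵢ × Zᵢ by ω̇ᵢ((z,ż))((w,ẇ)) := ωᵢ(z)(ẇ) + ωᵢ(ż)(w), and the difference form Ω̇ on (Z₂ × Z₂) × (Z₁ × Z₁) by Ω̇((Z,W))((Z',W')) := ω̇₂(Z)(Z') − ω̇₁(W)(W'). Suppose R ⊆ Z₂ × Z₁ is a submodule that is Lagrangian with respect to Ω, i.e., R = {v ∈ Z₂ × Z₁ | ∀ u ∈ R, Ω(u)(v) = 0}. Then the submodule TR := {((z₂,ż₂),(z₁,ż₁)) ∈ (Z₂ × Z₂) × (Z₁ × Z₁) | (z₂,z₁) ∈ R ∧ (ż₂,ż₁) ∈ R} is Lagrangian with respect to Ω̇. -/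

import Mathlib

/-!
The reshuffling `((z₂, ż₂), (z₁, ż₁)) ↦ ((z₂, z₁), (ż₂, ż₁))` is an isometry from the difference of
the tangent-lift forms onto the tangent lift of the difference form, and it pulls `R × R` back to
`TR`. So it suffices that `L × L` is Lagrangian for the tangent lift of `ω` whenever `L` is
Lagrangian for `ω`. The tangent lift pairs positions with velocities only, so the orthogonal of
`P × Q` is `Qᗮ × Pᗮ`, as one sees by testing against `(p, 0)` and `(0, q)` separately.
-/

open LinearMap (BilinMap)

section Lagrangian

variable {𝕜 M M' N : Type*} [CommSemiring 𝕜] [AddCommMonoid M] [Module 𝕜 M]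
  [AddCommMonoid M'] [Module 𝕜 M'] [AddCommMonoid N] [Module 𝕜 N]

/-- `L` is Lagrangian for the bilinear map `ω` if it equals its `ω`-orthogonal. As `ω` is arbitrary,
the side matters: the orthogonal is `{v | ∀ u ∈ L, ω u v = 0}`. -/
def IsLagrangian (ω : BilinMap 𝕜 M N) (L : Submodule 𝕜 M) : Prop :=
  L = L.orthogonalBilin ω

theorem isLagrangian_iff {ω : BilinMap 𝕜 M N} {L : Submodule 𝕜 M} :
    IsLagrangian ω L ↔ ∀ v, v ∈ L ↔ ∀ u ∈ L, ω u v = 0 :=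
  SetLike.ext_iff

theorem IsLagrangian.orthogonalBilin_eq {ω : BilinMap 𝕜 M N} {L : Submodule 𝕜 M}
    (hL : IsLagrangian ω L) : L.orthogonalBilin ω = L :=
  hL.symm

theorem orthogonalBilin_comap_of_surjective (ω : BilinMap 𝕜 M' N) (L : Submodule 𝕜 M')
    {f : M →ₗ[𝕜] M'} (hf : Function.Surjective f) :
    (L.comap f).orthogonalBilin (ω.compl₁₂ f f) = (L.orthogonalBilin ω).comap f := by
  ext v
  exact (hf.forall (p := fun u ↦ u ∈ L → ω u (f v) = 0)).symm

theorem IsLagrangian.comap_of_surjective {ω : BilinMap 𝕜 M' N} {L : Submodule 𝕜 M'}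
    (hL : IsLagrangian ω L) {f : M →ₗ[𝕜] M'} (hf : Function.Surjective f) :
    IsLagrangian (ω.compl₁₂ f f) (L.comap f) := by
  rw [IsLagrangian, orthogonalBilin_comap_of_surjective ω L hf, hL.orthogonalBilin_eq]

/-- The tangent lift `ω̇` of a bilinear map `ω` on `M` to `TM = M × M`, whose elements are pairs
`(z, ż)` of a position and a velocity; it is the derivative of `ω` along `(ż, ẇ)` at `(z, w)`. -/
def tangentLift (ω : BilinMap 𝕜 M N) : BilinMap 𝕜 (M × M) N :=
  ω.compl₁₂ (.fst 𝕜 M M) (.snd 𝕜 M M) + ω.compl₁₂ (.snd 𝕜 M M) (.fst 𝕜 M M)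

@[simp]
theorem tangentLift_apply (ω : BilinMap 𝕜 M N) (z w : M × M) :
    tangentLift ω z w = ω z.1 w.2 + ω z.2 w.1 :=
  rfl

theorem orthogonalBilin_tangentLift_prod (ω : BilinMap 𝕜 M N) (P Q : Submodule 𝕜 M) :
    (P.prod Q).orthogonalBilin (tangentLift ω) =
      (Q.orthogonalBilin ω).prod (P.orthogonalBilin ω) := by
  ext v
  constructor
  · intro hv
    have position_orthogonal : ∀ q ∈ Q, ω q v.1 = 0 := fun q hq ↦ by
      simpa using hv (0, q) ⟨P.zero_mem, hq⟩
    have velocity_orthogonal : ∀ p ∈ P, ω p v.2 = 0 := fun p hp ↦ by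
      simpa using hv (p, 0) ⟨hp, Q.zero_mem⟩
    exact ⟨position_orthogonal, velocity_orthogonal⟩
  · rintro ⟨hv₁, hv₂⟩ u ⟨hu₁, hu₂⟩
    rw [tangentLift_apply, hv₂ u.1 hu₁, hv₁ u.2 hu₂, add_zero]

theorem IsLagrangian.prod_self_tangentLift {ω : BilinMap 𝕜 M N} {L : Submodule 𝕜 M}
    (hL : IsLagrangian ω L) : IsLagrangian (tangentLift ω) (L.prod L) := by
  rw [IsLagrangian, orthogonalBilin_tangentLift_prod, hL.orthogonalBilin_eq]

end Lagrangian

section TangentProlongation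

variable {𝕜 M₁ M₂ : Type*} [Semiring 𝕜] [AddCommMonoid M₁] [Module 𝕜 M₁]
  [AddCommMonoid M₂] [Module 𝕜 M₂]

/-- The tangent prolongation `TR` of a linear relation `R ⊆ M₂ × M₁`. It is the tangent bundle
`R × R` of `R`, reshuffled into a relation from `TM₁ = M₁ × M₁` to `TM₂ = M₂ × M₂`. -/
def tangentProlongation (R : Submodule 𝕜 (M₂ × M₁)) : Submodule 𝕜 ((M₂ × M₂) × (M₁ × M₁)) :=
  (R.prod R).comap (LinearEquiv.prodProdProdComm 𝕜 M₂ M₂ M₁ M₁).toLinearMap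

end TangentProlongation

section Difference

variable {𝕜 M₁ M₂ N : Type*} [CommSemiring 𝕜] [AddCommMonoid M₁] [Module 𝕜 M₁]
  [AddCommMonoid M₂] [Module 𝕜 M₂] [AddCommGroup N] [Module 𝕜 N]

/-- The difference form `ω₂ ⊖ ω₁` on `M₂ × M₁`, for which canonical relations from `M₁` to `M₂` are
the Lagrangian submodules. The target `M₂` comes first, as in the product `T*M₂ × (−T*M₁)`. -/
def differenceForm (ω₂ : BilinMap 𝕜 M₂ N) (ω₁ : BilinMap 𝕜 M₁ N) : BilinMap 𝕜 (M₂ × M₁) N :=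
  ω₂.compl₁₂ (.fst 𝕜 M₂ M₁) (.fst 𝕜 M₂ M₁) - ω₁.compl₁₂ (.snd 𝕜 M₂ M₁) (.snd 𝕜 M₂ M₁)

theorem differenceForm_tangentLift (ω₂ : BilinMap 𝕜 M₂ N) (ω₁ : BilinMap 𝕜 M₁ N) :
    differenceForm (tangentLift ω₂) (tangentLift ω₁) =
      (tangentLift (differenceForm ω₂ ω₁)).compl₁₂
        (LinearEquiv.prodProdProdComm 𝕜 M₂ M₂ M₁ M₁).toLinearMap
        (LinearEquiv.prodProdProdComm 𝕜 M₂ M₂ M₁ M₁).toLinearMap :=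
  LinearMap.ext₂ fun _ _ ↦ add_sub_add_comm _ _ _ _

theorem tangent_prolongation_lagrangian_flat_general
    {ω₂ : BilinMap 𝕜 M₂ N} {ω₁ : BilinMap 𝕜 M₁ N} {R : Submodule 𝕜 (M₂ × M₁)}
    (hR : IsLagrangian (differenceForm ω₂ ω₁) R) :
    IsLagrangian (differenceForm (tangentLift ω₂) (tangentLift ω₁)) (tangentProlongation R) := by
  rw [differenceForm_tangentLift]
  exact hR.prod_self_tangentLift.comap_of_surjective (LinearEquiv.surjective _)

end Difference

/-- Flat linear model of the statement that the tangent prolongation `TΦ` of a thick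
morphism `Φ` (a Lagrangian submanifold of `T*M₂ × (−T*M₁)`) is again a canonical
relation, i.e., Lagrangian in `T(T*M₂) × (−T(T*M₁))`: if a subspace `R ⊆ Z₂ × Z₁`
is Lagrangian for the difference form `Ω = ω₂ ⊖ ω₁`, then its tangent prolongation
`TR = {((z₂,ż₂),(z₁,ż₁)) | (z₂,z₁) ∈ R ∧ (ż₂,ż₁) ∈ R}` is Lagrangian for the
difference `Ω̇` of the tangent-lift forms `ω̇ᵢ`. -/
theorem tangent_prolongation_lagrangian_flat {Z₁ Z₂ : Type*}
    [AddCommGroup Z₁] [Module ℝ Z₁] [AddCommGroup Z₂] [Module ℝ Z₂]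
    (ω₁ : Z₁ →ₗ[ℝ] Z₁ →ₗ[ℝ] ℝ) (ω₂ : Z₂ →ₗ[ℝ] Z₂ →ₗ[ℝ] ℝ)
    (R : Submodule ℝ (Z₂ × Z₁))
    -- `R` is Lagrangian with respect to `Ω((z₂,z₁))((w₂,w₁)) = ω₂(z₂)(w₂) − ω₁(z₁)(w₁)`
    (hR : ∀ v : Z₂ × Z₁, v ∈ R ↔ ∀ u ∈ R, ω₂ u.1 v.1 - ω₁ u.2 v.2 = 0) :
    let ωdot₂ : Z₂ × Z₂ → Z₂ × Z₂ → ℝ := fun z w => ω₂ z.1 w.2 + ω₂ z.2 w.1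
    let ωdot₁ : Z₁ × Z₁ → Z₁ × Z₁ → ℝ := fun z w => ω₁ z.1 w.2 + ω₁ z.2 w.1
    let Ωdot : (Z₂ × Z₂) × (Z₁ × Z₁) → (Z₂ × Z₂) × (Z₁ × Z₁) → ℝ :=
      fun Zv Wv => ωdot₂ Zv.1 Wv.1 - ωdot₁ Zv.2 Wv.2
    -- `TR = {((z₂,ż₂),(z₁,ż₁)) | (z₂,z₁) ∈ R ∧ (ż₂,ż₁) ∈ R}` is Lagrangian for `Ω̇`
    ∀ v : (Z₂ × Z₂) × (Z₁ × Z₁),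
      ((v.1.1, v.2.1) ∈ R ∧ (v.1.2, v.2.2) ∈ R) ↔
        ∀ u : (Z₂ × Z₂) × (Z₁ × Z₁),
          ((u.1.1, u.2.1) ∈ R ∧ (u.1.2, u.2.2) ∈ R) → Ωdot u v = 0 := by
  exact isLagrangian_iff.mp (tangent_prolongation_lagrangian_flat_general (isLagrangian_iff.mpr hR))
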